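/- arXiv:2205.12515 — 2 statements merged into one kernel-verified Lean document; each statement's English description precedes it below -/
import Mathlib

section
/- Let 𝒜 be a nonempty finite type, let w : 𝒜 → ℝ, let p_w be the softmax distribution of w, and let Ent(w) = −∑_{a∈𝒜} p_w(a)·log(p_w(a)) be its entropy. Then for every ā ∈ 𝒜, the partial derivative of the entropy with respect to the coordinate w(ā) — i.e. the derivative at t = w(ā) of the map t ↦ entropy of the softmax of w with its ā-coordinate replaced by t — equals −p_w(ā)·log(p_w(ā)) − p_w(ā)·Ent(w). -/
open Real Finset

/-- The softmax distribution of a weight vector `w`. -/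
noncomputable def softmax {𝒜 : Type*} [Fintype 𝒜] (w : 𝒜 → ℝ) (a : 𝒜) : ℝ :=
  Real.exp (w a) / ∑ a' : 𝒜, Real.exp (w a')

/-- The entropy of the softmax distribution of `w`. -/
noncomputable def softmaxEntropy {𝒜 : Type*} [Fintype 𝒜] (w : 𝒜 → ℝ) : ℝ :=
  -∑ a : 𝒜, softmax w a * Real.log (softmax w a)

theorem softmax_pos_aux {𝒜 : Type*} [Fintype 𝒜] [Nonempty 𝒜] (w : 𝒜 → ℝ) (a : 𝒜) :
    0 < softmax w a :=
  div_pos (Real.exp_pos _) (Finset.sum_pos (fun _ _ => Real.exp_pos _) Finset.univ_nonempty)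

theorem softmax_sum_aux {𝒜 : Type*} [Fintype 𝒜] [Nonempty 𝒜] (w : 𝒜 → ℝ) :
    ∑ a, softmax w a = 1 := by
  have hZ : 0 < ∑ a' : 𝒜, Real.exp (w a') :=
    Finset.sum_pos (fun _ _ => Real.exp_pos _) Finset.univ_nonempty
  simp only [softmax]
  rw [← Finset.sum_div, div_self hZ.ne']

theorem softmax_hasDerivAt_aux {𝒜 : Type*} [Fintype 𝒜] [Nonempty 𝒜] [DecidableEq 𝒜]
    (w : 𝒜 → ℝ) (abar a : 𝒜) :
    HasDerivAt (fun t : ℝ => softmax (Function.update w abar t) a)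
      (softmax w a * ((if a = abar then 1 else 0) - softmax w abar)) (w abar) := by
  have hZ : 0 < ∑ a' : 𝒜, Real.exp (w a') :=
    Finset.sum_pos (fun _ _ => Real.exp_pos _) Finset.univ_nonempty
  have he : ∀ b : 𝒜, HasDerivAt (fun t : ℝ => Real.exp (Function.update w abar t b))
      (if b = abar then Real.exp (w b) else 0) (w abar) := by
    intro b
    by_cases hb : b = abar
    · subst hb
      simpa using Real.hasDerivAt_exp (w b)
    · simpa [hb] using hasDerivAt_const (w abar) (Real.exp (w b))
  have hs := HasDerivAt.fun_sum (u := Finset.univ) (fun b _ => he b)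
  have hd := (he a).fun_div hs (by simpa using hZ.ne')
  refine hd.congr_deriv ?_
  simp only [Function.update_eq_self, Finset.sum_ite_eq', Finset.mem_univ, if_true, softmax]
  split_ifs <;> field_simp
  ring

/-- The partial derivative of the softmax entropy with respect to coordinate `abar`
equals `-p(abar) log p(abar) - p(abar) · Ent(w)`. -/
theorem softmaxEntropy_hasDerivAt_coord {𝒜 : Type*} [Fintype 𝒜] [Nonempty 𝒜] [DecidableEq 𝒜]
    (w : 𝒜 → ℝ) (abar : 𝒜) :
    HasDerivAt (fun t : ℝ => softmaxEntropy (Function.update w abar t))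
      (-softmax w abar * Real.log (softmax w abar)
        - softmax w abar * softmaxEntropy w) (w abar) := by
  have hp := softmax_pos_aux w
  have hd : ∀ a : 𝒜, HasDerivAt (fun t : ℝ => softmax (Function.update w abar t) a *
      Real.log (softmax (Function.update w abar t) a))
      (softmax w a * ((if a = abar then 1 else 0) - softmax w abar) *
        (Real.log (softmax w a) + 1)) (w abar) := by
    intro a
    have h := softmax_hasDerivAt_aux w abar a
    have hl := h.log (by simpa using (hp a).ne')
    refine (h.fun_mul hl).congr_deriv ?_
    simp only [Function.update_eq_self]
    have := (hp a).ne'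
    field_simp
  have hs := (HasDerivAt.fun_sum (u := Finset.univ) (fun a _ => hd a)).fun_neg
  refine hs.congr_deriv ?_
  have e : ∀ a : 𝒜, softmax w a * ((if a = abar then 1 else 0) - softmax w abar) *
        (Real.log (softmax w a) + 1) =
      (if a = abar then softmax w a * (Real.log (softmax w a) + 1) else 0)
        - softmax w abar * (softmax w a * Real.log (softmax w a))
        - softmax w abar * softmax w a := by
    intro a
    split_ifs <;> ring
  simp only [e, Finset.sum_sub_distrib, ← Finset.mul_sum, softmax_sum_aux, softmaxEntropy,
    Finset.sum_ite_eq', Finset.mem_univ, if_true]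
  ring
end

section
/- Let S be a nonempty finite type, let P : S × S → ℝ be a row-stochastic matrix (all entries nonnegative and every row summing to 1), let γ ∈ ℝ with 0 ≤ γ < 1, and let r : S → ℝ. Then the Bellman-type linear system v = r + γ·(P ⬝ v) has a unique solution v : S → ℝ, namely v = (I − γ·P)⁻¹ ⬝ r. -/
open Matrix Finset

/-- For a row-stochastic matrix `P`, `0 ≤ γ < 1`, and reward vector `r`, the
Bellman system `v = r + γ • (P *ᵥ v)` has the unique solution
`v = (1 - γ • P)⁻¹ *ᵥ r`. -/
theorem bellman_unique_solution {S : Type*} [Fintype S] [Nonempty S] [DecidableEq S]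
    (P : Matrix S S ℝ) (hP0 : ∀ i j, 0 ≤ P i j) (hP1 : ∀ i, ∑ j, P i j = 1)
    (γ : ℝ) (hγ0 : 0 ≤ γ) (hγ1 : γ < 1) (r : S → ℝ) :
    ∀ v : S → ℝ, v = r + γ • (P *ᵥ v) ↔ v = (1 - γ • P)⁻¹ *ᵥ r := by
  have hdet : (1 - γ • P).det ≠ 0 := by
    apply det_ne_zero_of_sum_row_lt_diag
    intro k
    have h1 : ∑ j ∈ Finset.univ.erase k, ‖(1 - γ • P) k j‖
        = γ * ∑ j ∈ Finset.univ.erase k, P k j := by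
      rw [Finset.mul_sum]
      refine Finset.sum_congr rfl fun j hj => ?_
      have hkj : k ≠ j := (Finset.ne_of_mem_erase hj).symm
      simp [Matrix.one_apply_ne hkj, abs_of_nonneg hγ0, abs_of_nonneg (hP0 k j)]
    have h2 : P k k + ∑ j ∈ Finset.univ.erase k, P k j = 1 := by
      rw [Finset.add_sum_erase _ _ (Finset.mem_univ k), hP1]
    have h3 : (1 - γ • P) k k = 1 - γ * P k k := by simp
    rw [h1, h3]
    refine lt_of_lt_of_le ?_ (le_abs_self _)
    have h4 : γ * P k k + γ * ∑ j ∈ Finset.univ.erase k, P k j = γ := by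
      rw [← mul_add, h2, mul_one]
    linarith
  have hu : IsUnit (1 - γ • P).det := isUnit_iff_ne_zero.mpr hdet
  intro v
  have key : (1 - γ • P) *ᵥ v = v - γ • (P *ᵥ v) := by
    rw [Matrix.sub_mulVec, Matrix.one_mulVec, Matrix.smul_mulVec]
  constructor
  · intro h
    have hr : r = (1 - γ • P) *ᵥ v := by
      rw [key]
      exact eq_sub_of_add_eq h.symm
    rw [hr, Matrix.mulVec_mulVec, Matrix.nonsing_inv_mul _ hu, Matrix.one_mulVec]
  · intro h
    have hr : (1 - γ • P) *ᵥ v = r := by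
      rw [h, Matrix.mulVec_mulVec, Matrix.mul_nonsing_inv _ hu, Matrix.one_mulVec]
    rw [key] at hr
    exact sub_eq_iff_eq_add.mp hr
end
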